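/- arXiv:1710.08496 — 2 statements merged into one kernel-verified Lean document; each statement's English description precedes it below -/
import Mathlib

section
/- Let A be a nonzero real n×d matrix with squared Frobenius norm ‖A‖_F² and rows A_{i,:}. Define sampling probabilities p_i = ‖A_{i,:}‖²/‖A‖_F² for i = 1,…,n, and draw s indices i_1,…,i_s independently, each with distribution (p_1,…,p_n). Let S be the s×n row norm squares sampling matrix whose j-th row has entry 1/√(p_{i_j} s) in column i_j and zeros elsewhere, so that AᵀSᵀSA = (1/s)·Σ_{j=1}^{s} p_{i_j}^{-1} A_{i_j,:}ᵀ A_{i_j,:}. Then the expectation over the random indices satisfies E‖AᵀSᵀSA − AᵀA‖ ≤ ( √(4·sr(A)·log(2d)/s) + 2·sr(A)·log(2d)/(3s) )·‖A‖², where sr(A) = ‖A‖_F²/‖A‖² is the stable rank of A. -/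
/-!
The bound is an expectation form of the matrix Bernstein inequality, obtained by the Laplace
transform method of Ahlswede and Winter.

Write `G = AᵀA`, `F = ‖A‖_F²`, `q = ‖A‖²` and `Bᵢ = pᵢ⁻¹ aᵢ aᵢᵀ`, so that `∑ pᵢ Bᵢ = G` and
`Bᵢ² = F Bᵢ`. For a real `θ` with `|θ| F ≤ 3/2` put `Xᵢ = θ (Bᵢ - G)`.

* Since `0 ≤ Bᵢ, G ≤ F`, the spectrum of `Xᵢ` lies in `[-3/2, 3/2]`, where `eˣ ≤ 1 + x + x²`.
  Averaging, `∑ pᵢ exp Xᵢ ≤ 1 + θ² (F G - G²) ≤ c` with `c = 1 + θ² F q`.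
* The Golden–Thompson inequality `tr exp (H + X) ≤ tr (exp H exp X)` peels off one sample at a time
  and gives `E tr exp (∑ⱼ X_{iⱼ}) ≤ d cˢ` (`sum_prod_trace_exp_le`, `sampling_mgf`).
* For symmetric `Z`, `exp ‖Z‖ ≤ tr exp Z + tr exp (-Z)`. Taking `Z = θ s (M - G)` and using the
  concavity of `log`, `θ s E‖M - G‖ ≤ log (2 d) + s θ² F q` for `0 < θ ≤ 3 / (2 F)`.
* `optimize_theta` chooses `θ`: the unconstrained optimum `√(log (2 d) / (s F q))` if it is
  admissible, which gives the square root term alone, and the endpoint `3 / (2 F)` otherwise, which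
  produces the term `2 F log (2 d) / (3 s)`.

Golden–Thompson is deduced from the trace inequality `tr ((PQ)^(2^k)) ≤ tr (P^(2^k) Q^(2^k))` for
symmetric `P`, `Q` (`trace_pow_two_pow_le`), applied to `P = exp (2⁻ᵏ A)` and `Q = exp (2⁻ᵏ B)`, and
the Lie–Trotter product formula (`trotter`).
-/

open scoped BigOperators
open Matrix

/-- Spectral norm (largest singular value) of a real matrix. -/
noncomputable def specNorm {m n : ℕ} (A : Matrix (Fin m) (Fin n) ℝ) : ℝ :=
  ‖(LinearMap.toContinuousLinearMap (Matrix.toEuclideanLin A))‖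

/-! ### Trace inequalities for powers -/

theorem trace_pow_mul_comm {m : Type*} [Fintype m] [DecidableEq m] (U V : Matrix m m ℝ) (k : ℕ) :
    ((U * V) ^ k).trace = ((V * U) ^ k).trace := by
  cases k with
  | zero => simp
  | succ k =>
    rw [pow_succ, ← mul_assoc, mul_pow_mul, mul_assoc, Matrix.trace_mul_comm, mul_assoc, ← pow_succ]

/-- The trace form of the arithmetic–geometric mean inequality, from
`tr ((Xᴴ - Y)ᴴ (Xᴴ - Y)) ≥ 0`. -/
theorem two_mul_trace_mul_le {m : Type*} [Fintype m] [DecidableEq m] (X Y : Matrix m m ℝ) :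
    2 * (X * Y).trace ≤ (X * Xᴴ).trace + (Yᴴ * Y).trace := by
  have h := (posSemidef_conjTranspose_mul_self (Xᴴ - Y)).trace_nonneg
  have h2 : (Yᴴ * Xᴴ).trace = (X * Y).trace := by
    rw [← conjTranspose_mul, trace_conjTranspose]; simp
  simp only [conjTranspose_sub, conjTranspose_conjTranspose, sub_mul, mul_sub, trace_sub, h2] at h
  linarith

/-- The two inequalities are proved by a joint induction on the exponent. Bounding
`tr ((AB)^(2^(k+1)))` uses the first one for `X = AB`, since `tr ((ABBA)^m) = tr ((A²B²)^m)`;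
bounding `tr (X^(2^(k+2)))` uses the first one for `X²` and then the second one for the symmetric
matrices `XᴴX` and `XXᴴ`, whose powers have equal traces. -/
theorem trace_pow_two_pow_le {m : Type*} [Fintype m] [DecidableEq m] (k : ℕ) :
    (∀ X : Matrix m m ℝ, (X ^ 2 ^ (k + 1)).trace ≤ ((X * Xᴴ) ^ 2 ^ k).trace) ∧
    (∀ A B : Matrix m m ℝ, A.IsHermitian → B.IsHermitian →
      ((A * B) ^ 2 ^ k).trace ≤ (A ^ 2 ^ k * B ^ 2 ^ k).trace) := by
  induction k with
  | zero =>
    refine ⟨fun X => ?_, fun A B _ _ => by simp⟩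
    have h := two_mul_trace_mul_le X X
    rw [trace_mul_comm Xᴴ X] at h
    simp only [zero_add, pow_one, pow_zero, sq]
    linarith
  | succ k ih =>
    obtain ⟨hD, hC⟩ := ih
    constructor
    · intro X
      have hP : (Xᴴ * X).IsHermitian := isHermitian_conjTranspose_mul_self X
      have hQ : (X * Xᴴ).IsHermitian := isHermitian_mul_conjTranspose_self X
      have h1 := hD (X ^ 2)
      have h2 : ((X ^ 2 * (X ^ 2)ᴴ) ^ 2 ^ k).trace = (((Xᴴ * X) * (X * Xᴴ)) ^ 2 ^ k).trace := by
        rw [show X ^ 2 * (X ^ 2)ᴴ = (X * X * Xᴴ) * Xᴴ by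
          simp [sq, mul_assoc], trace_pow_mul_comm]
        simp only [mul_assoc]
      have h3 := hC _ _ hP hQ
      have h4 := two_mul_trace_mul_le ((Xᴴ * X) ^ 2 ^ k) ((X * Xᴴ) ^ 2 ^ k)
      rw [(hP.pow _).eq, (hQ.pow _).eq, ← pow_add, ← pow_add, trace_pow_mul_comm Xᴴ X,
        ← mul_two (2 ^ k), ← pow_succ] at h4
      rw [← pow_mul, ← pow_succ'] at h1
      linarith
    · intro A B hA hB
      have h1 := hD (A * B)
      have h2 : ((A * B * (A * B)ᴴ) ^ 2 ^ k).trace = ((A ^ 2 * B ^ 2) ^ 2 ^ k).trace := by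
        rw [conjTranspose_mul, hA.eq, hB.eq,
          show A * B * (B * A) = (A * B * B) * A by simp only [mul_assoc], trace_pow_mul_comm]
        simp only [mul_assoc, sq]
      have h3 := hC _ _ (hA.pow 2) (hB.pow 2)
      rw [← pow_mul, ← pow_mul, ← pow_succ'] at h3
      linarith

/-! ### The Lie–Trotter product formula -/

section Trotter
open NormedSpace Filter Topology
variable {E : Type*} [NormedRing E] [NormedAlgebra ℝ E] [CompleteSpace E] [NormOneClass E]

omit [CompleteSpace E] in
theorem norm_exp_le_exp_norm' (x : E) : ‖exp x‖ ≤ Real.exp ‖x‖ := by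
  rw [exp_eq_tsum ℝ, Real.exp_eq_exp_ℝ, exp_eq_tsum ℝ]
  refine tsum_of_norm_bounded (expSeries_summable' (𝕂 := ℝ) ‖x‖).hasSum fun i => ?_
  rw [norm_smul, smul_eq_mul, Real.norm_of_nonneg (by positivity)]
  gcongr
  exact norm_pow_le x i

omit [NormedAlgebra ℝ E] [CompleteSpace E] in
theorem norm_pow_sub_pow_le {X Y : E} {c : ℝ} (hc : 1 ≤ c) (hX : ‖X‖ ≤ c) (hY : ‖Y‖ ≤ c) (k : ℕ) :
    ‖X ^ k - Y ^ k‖ ≤ k * c ^ k * ‖X - Y‖ := by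
  induction k with
  | zero => simp
  | succ k ih =>
    have e : X ^ (k + 1) - Y ^ (k + 1) = X ^ k * (X - Y) + (X ^ k - Y ^ k) * Y := by
      rw [pow_succ, pow_succ, mul_sub, sub_mul]; abel
    have hXk : ‖X ^ k‖ ≤ c ^ (k + 1) :=
      (norm_pow_le X k).trans ((pow_le_pow_left₀ (norm_nonneg _) hX k).trans
        (pow_le_pow_right₀ hc (Nat.le_succ k)))
    rw [e]
    calc _ ≤ ‖X ^ k‖ * ‖X - Y‖ + ‖X ^ k - Y ^ k‖ * ‖Y‖ :=
          (norm_add_le _ _).trans (add_le_add (norm_mul_le _ _) (norm_mul_le _ _))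
      _ ≤ c ^ (k + 1) * ‖X - Y‖ + (k * c ^ k * ‖X - Y‖) * c := by gcongr
      _ = _ := by push_cast; ring

/-- With `X = exp (A/k) exp (B/k)` and `Y = exp ((A+B)/k)`, the difference `X ^ k - Y ^ k` is at most
`exp (‖A‖ + ‖B‖) * k * ‖X - Y‖`, and `k * (X - Y)` is a difference quotient at `0` of
`t ↦ exp (tA) exp (tB) - exp (t(A+B))`, whose derivative there vanishes. -/
theorem trotter (A B : E) :
    Tendsto (fun k : ℕ => (exp ((k : ℝ)⁻¹ • A) * exp ((k : ℝ)⁻¹ • B)) ^ k) atTop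
      (𝓝 (exp (A + B))) := by
  have hd : HasDerivAt (fun t : ℝ => exp (t • A) * exp (t • B) - exp (t • (A + B))) 0 0 := by
    have h := ((hasDerivAt_exp_smul_const A (0 : ℝ)).mul
      (hasDerivAt_exp_smul_const B (0 : ℝ))).sub (hasDerivAt_exp_smul_const (A + B) (0 : ℝ))
    convert! h using 1
    simp
  have hinv : Tendsto (fun k : ℕ => ((k : ℝ)⁻¹)) atTop (𝓝[≠] 0) := by
    refine tendsto_nhdsWithin_iff.2 ⟨tendsto_inv_atTop_nhds_zero_nat, ?_⟩
    filter_upwards [eventually_gt_atTop 0] with k hk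
    have : (k : ℝ) ≠ 0 := by positivity
    simpa using hk.ne'
  have hs := (hd.tendsto_slope).comp hinv
  rw [tendsto_iff_norm_sub_tendsto_zero]
  have hlim : Tendsto (fun k : ℕ => Real.exp (‖A‖ + ‖B‖) *
      ‖slope (fun t : ℝ => exp (t • A) * exp (t • B) - exp (t • (A + B))) 0 ((k : ℝ)⁻¹)‖)
      atTop (𝓝 0) := by
    simpa using hs.norm.const_mul (Real.exp (‖A‖ + ‖B‖))
  refine squeeze_zero' (Eventually.of_forall fun _ => norm_nonneg _) ?_ hlim
  filter_upwards [eventually_gt_atTop 0] with k hk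
  have hk' : (0 : ℝ) < k := by positivity
  set a : ℝ := (k : ℝ)⁻¹ with ha
  have ha0 : 0 < a := by positivity
  have hY : exp (A + B) = (exp (a • (A + B))) ^ k := by
    let _ : NormedAlgebra ℚ E := NormedAlgebra.restrictScalars ℚ ℝ E
    rw [← NormedSpace.exp_nsmul, ← Nat.cast_smul_eq_nsmul ℝ, smul_smul, ha,
      mul_inv_cancel₀ hk'.ne', one_smul]
  have hnorm : ∀ x : E, ‖exp (a • x)‖ ≤ Real.exp (a * ‖x‖) := fun x => by
    simpa [norm_smul, abs_of_pos ha0] using norm_exp_le_exp_norm' (a • x)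
  have hXn : ‖exp (a • A) * exp (a • B)‖ ≤ Real.exp (a * (‖A‖ + ‖B‖)) := by
    rw [mul_add, Real.exp_add]
    exact (norm_mul_le _ _).trans (mul_le_mul (hnorm A) (hnorm B) (norm_nonneg _) (by positivity))
  have hYn : ‖exp (a • (A + B))‖ ≤ Real.exp (a * (‖A‖ + ‖B‖)) :=
    (hnorm _).trans (Real.exp_le_exp.2 (by gcongr; exact norm_add_le _ _))
  have hc : 1 ≤ Real.exp (a * (‖A‖ + ‖B‖)) := Real.one_le_exp (by positivity)
  rw [hY]
  refine (norm_pow_sub_pow_le hc hXn hYn k).trans (le_of_eq ?_)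
  rw [← Real.exp_nat_mul, ← mul_assoc, ha, mul_inv_cancel₀ hk'.ne', one_mul]
  simp only [slope, vsub_eq_sub, sub_zero, zero_smul, exp_zero, mul_one, sub_self]
  rw [norm_smul, Real.norm_of_nonneg (by positivity), inv_inv]
  ring
end Trotter

/-! ### The Golden–Thompson inequality -/

section GT
open NormedSpace Filter Topology
open scoped Matrix.Norms.L2Operator

/-- The **Golden–Thompson inequality** for real symmetric matrices. -/
theorem golden_thompson {m : Type*} [Fintype m] [DecidableEq m] [Nonempty m]
    {A B : Matrix m m ℝ} (hA : A.IsHermitian) (hB : B.IsHermitian) :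
    (exp (A + B)).trace ≤ (exp A * exp B).trace := by
  have : CompleteSpace (Matrix m m ℝ) := FiniteDimensional.complete ℝ _
  have ht := (trotter A B).comp (tendsto_pow_atTop_atTop_of_one_lt (r := 2) (by norm_num))
  have ht' := ((continuous_id.matrix_trace (R := ℝ) (n := m)).tendsto _).comp ht
  refine le_of_tendsto ht' (Eventually.of_forall fun k => ?_)
  have hs : ∀ X : Matrix m m ℝ, exp ((((2 ^ k : ℕ) : ℝ))⁻¹ • X) ^ (2 ^ k) = exp X := fun X => by
    rw [← Matrix.exp_nsmul, ← Nat.cast_smul_eq_nsmul ℝ, smul_smul, mul_inv_cancel₀ (by positivity),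
      one_smul]
  have h := (trace_pow_two_pow_le (m := m) k).2 (exp ((((2 ^ k : ℕ) : ℝ))⁻¹ • A))
    (exp ((((2 ^ k : ℕ) : ℝ))⁻¹ • B)) (hA.smul (IsSelfAdjoint.all _)).exp
    (hB.smul (IsSelfAdjoint.all _)).exp
  rw [hs, hs] at h
  exact h
end GT

/-! ### Spectral calculus and the matrix Laplace transform -/

section Spectral
open NormedSpace
open scoped Matrix.Norms.L2Operator
variable {m : Type*} [Fintype m] [DecidableEq m]

/-- A single orthogonal matrix diagonalizes `X` and all the exponentials `exp (c • X)`. -/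
theorem exists_diag {X : Matrix m m ℝ} (hX : X.IsHermitian) :
    ∃ (U : Matrix m m ℝ) (l : m → ℝ), U * Uᴴ = 1 ∧ Uᴴ * U = 1 ∧ X = U * diagonal l * Uᴴ ∧
      ∀ c : ℝ, exp (c • X) = U * diagonal (fun i => Real.exp (c * l i)) * Uᴴ := by
  have h1 : (hX.eigenvectorUnitary : Matrix m m ℝ) * (hX.eigenvectorUnitary : Matrix m m ℝ)ᴴ = 1 :=
    Unitary.coe_mul_star_self hX.eigenvectorUnitary
  have h2 : (hX.eigenvectorUnitary : Matrix m m ℝ)ᴴ * (hX.eigenvectorUnitary : Matrix m m ℝ) = 1 :=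
    Unitary.coe_star_mul_self hX.eigenvectorUnitary
  have h3 : X = (hX.eigenvectorUnitary : Matrix m m ℝ) * diagonal hX.eigenvalues *
      (hX.eigenvectorUnitary : Matrix m m ℝ)ᴴ := by
    have := hX.spectral_theorem
    rwa [Unitary.conjStarAlgAut_apply] at this
  refine ⟨_, _, h1, h2, h3, fun c => ?_⟩
  have h4 := Matrix.exp_units_conj ⟨_, _, h1, h2⟩ (diagonal fun i => c * hX.eigenvalues i)
  simp only [Units.inv_mk] at h4
  have h5 : c • X = (hX.eigenvectorUnitary : Matrix m m ℝ) *
      diagonal (fun i => c * hX.eigenvalues i) * (hX.eigenvectorUnitary : Matrix m m ℝ)ᴴ := by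
    rw [show (diagonal fun i => c * hX.eigenvalues i) = c • diagonal hX.eigenvalues by
      rw [← diagonal_smul]; rfl]
    conv_lhs => rw [h3]
    simp
  rw [h5]
  refine h4.trans ?_
  rw [Matrix.exp_diagonal]
  congr 3
  ext i
  simp [NormedSpace.exp_def, Real.exp_eq_exp_ℝ]

/-- The fourth-order Taylor bound needs an argument in `[-1, 1]`, so it is applied to `x / 2` and
squared. -/
theorem exp_le_one_add_add_sq {x : ℝ} (h1 : -(3 / 2) ≤ x) (h2 : x ≤ 3 / 2) :
    Real.exp x ≤ 1 + x + x ^ 2 := by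
  set y := x / 2 with hy
  have hya : |y| ≤ 3 / 4 := abs_le.2 ⟨by linarith, by linarith⟩
  have hb := (abs_le.1 (Real.exp_bound (x := y) (by linarith) (n := 4) (by norm_num))).2
  rw [Even.pow_abs (by decide)] at hb
  norm_num [Finset.sum_range_succ, Nat.factorial] at hb
  have hp : ∀ k : ℕ, y ^ k ≤ (3 / 4) ^ k := fun k =>
    (le_abs_self _).trans (by rw [abs_pow]; exact pow_le_pow_left₀ (abs_nonneg _) hya k)
  have hle : Real.exp y ≤ 1 + y + y ^ 2 / 2 + y ^ 3 / 6 + y ^ 4 * (5 / 96) := by linarith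
  have hsq : Real.exp x = Real.exp y ^ 2 := by rw [← Real.exp_nat_mul]; congr 1; simp [hy]; ring
  have hsq2 := pow_le_pow_left₀ (Real.exp_pos y).le hle 2
  -- `1 + 2 * y + 4 * y ^ 2` minus the square of the Taylor bound is `y ^ 2` times this quantity.
  have hq : 0 ≤ 2 - (4 / 3 * y + 11 / 16 * y ^ 2 + 13 / 48 * y ^ 3 + 23 / 288 * y ^ 4
      + 5 / 288 * y ^ 5 + 25 / 9216 * y ^ 6) := by
    have := hp 1; have := hp 2; have := hp 3; have := hp 4; have := hp 5; have := hp 6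
    norm_num at *
    linarith
  have hx : x = 2 * y := by rw [hy]; ring
  have := mul_nonneg (sq_nonneg y) hq
  rw [hsq]
  refine hsq2.trans ?_
  rw [hx]
  nlinarith

/-- The Loewner-order version of `eˣ ≤ 1 + x + x²` on `[-3/2, 3/2]`. -/
theorem posSemidef_one_add_add_sq_sub_exp {X : Matrix m m ℝ} (hX : X.IsHermitian)
    (h1 : ((3 / 2 : ℝ) • (1 : Matrix m m ℝ) - X).PosSemidef)
    (h2 : ((3 / 2 : ℝ) • (1 : Matrix m m ℝ) + X).PosSemidef) :
    (1 + X + X * X - exp X).PosSemidef := by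
  obtain ⟨U, l, hU, hU', hXU, hexp⟩ := exists_diag hX
  have hD : Uᴴ * X * U = diagonal l := by
    rw [hXU]
    calc _ = (Uᴴ * U) * diagonal l * (Uᴴ * U) := by simp only [mul_assoc]
      _ = _ := by rw [hU']; simp
  have hl : ∀ i, -(3 / 2) ≤ l i ∧ l i ≤ 3 / 2 := fun i => by
    have a := (h1.conjTranspose_mul_mul_same U).diag_nonneg (i := i)
    have b := (h2.conjTranspose_mul_mul_same U).diag_nonneg (i := i)
    rw [mul_sub, sub_mul, hD] at a
    rw [mul_add, add_mul, hD] at b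
    rw [Matrix.mul_smul, mul_one, Matrix.smul_mul, hU'] at a b
    simp at a b
    constructor <;> linarith
  have hXX : X * X = U * diagonal (fun i => l i ^ 2) * Uᴴ := by
    conv_lhs => rw [hXU]
    calc _ = U * (diagonal l * (Uᴴ * U) * diagonal l) * Uᴴ := by simp only [mul_assoc]
      _ = _ := by rw [hU']; simp [diagonal_mul_diagonal, sq]
  have he := hexp 1
  simp only [one_smul, one_mul] at he
  have : 1 + X + X * X - exp X
      = U * diagonal (fun i => 1 + l i + l i ^ 2 - Real.exp (l i)) * Uᴴ := by
    rw [hXX, he]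
    conv_lhs => rw [hXU, ← hU]
    have e : diagonal (fun i => 1 + l i + l i ^ 2 - Real.exp (l i)) =
        1 + diagonal l + diagonal (fun i => l i ^ 2) - diagonal (fun i => Real.exp (l i)) := by
      rw [← diagonal_one, diagonal_add, diagonal_add, diagonal_sub]
    rw [e]
    simp only [mul_sub, mul_add, sub_mul, add_mul, mul_one]
  rw [this]
  refine PosSemidef.mul_mul_conjTranspose_same (PosSemidef.diagonal fun i => ?_) U
  have := exp_le_one_add_add_sq (hl i).1 (hl i).2
  simp only [Pi.zero_apply]
  linarith

theorem trace_eq_sum_of_diag {X : Matrix m m ℝ} {U : Matrix m m ℝ} {l : m → ℝ} (hU' : Uᴴ * U = 1)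
    (h : X = U * diagonal l * Uᴴ) : X.trace = ∑ i, l i := by
  rw [h, trace_mul_cycle, hU', one_mul, trace_diagonal]

theorem opNorm_le_log_trace_exp [Nonempty m] {Z : Matrix m m ℝ} (hZ : Z.IsHermitian) :
    1 ≤ (exp Z).trace + (exp (-Z)).trace ∧
    ‖Z‖ ≤ Real.log ((exp Z).trace + (exp (-Z)).trace) := by
  obtain ⟨U, l, hU, hU', hZU, hexp⟩ := exists_diag hZ
  have e1 := trace_eq_sum_of_diag hU' (hexp 1)
  have e2 := trace_eq_sum_of_diag hU' (hexp (-1))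
  simp only [one_smul, neg_smul, one_mul, neg_mul] at e1 e2
  have key : ∀ i, Real.exp |l i| ≤ (exp Z).trace + (exp (-Z)).trace := fun i => by
    have a : Real.exp (l i) ≤ ∑ i, Real.exp (l i) :=
      Finset.single_le_sum (fun _ _ => (Real.exp_pos _).le) (Finset.mem_univ i)
    have b : Real.exp (-l i) ≤ ∑ i, Real.exp (-l i) :=
      Finset.single_le_sum (f := fun i => Real.exp (-l i)) (fun _ _ => (Real.exp_pos _).le)
        (Finset.mem_univ i)
    have := Real.exp_pos (l i)
    have := Real.exp_pos (-l i)
    rcases abs_choice (l i) with h | h <;> rw [h, e1, e2] <;> linarith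
  have hT : 1 ≤ (exp Z).trace + (exp (-Z)).trace :=
    (Real.one_le_exp (abs_nonneg _)).trans (key (Classical.arbitrary m))
  refine ⟨hT, ?_⟩
  have hn : ‖U‖ = 1 := by
    have h := l2_opNorm_conjTranspose_mul_self U
    rw [hU', norm_one] at h
    nlinarith [norm_nonneg U]
  calc ‖Z‖ ≤ ‖U‖ * ‖diagonal l‖ * ‖Uᴴ‖ := by
        rw [hZU]
        exact (norm_mul_le _ _).trans (by gcongr; exact norm_mul_le _ _)
    _ = ‖l‖ := by rw [l2_opNorm_conjTranspose, hn, l2_opNorm_diagonal]; ring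
    _ ≤ _ := by
      refine (pi_norm_le_iff_of_nonneg (Real.log_nonneg hT)).2 fun i => ?_
      rw [Real.norm_eq_abs, Real.le_log_iff_exp_le (by linarith)]
      exact key i

theorem trace_exp_mul_nonneg {P Q : Matrix m m ℝ} (hP : P.IsHermitian)
    (hQ : Q.PosSemidef) : 0 ≤ (exp P * Q).trace := by
  have h : exp P = (exp ((1 / 2 : ℝ) • P))ᴴ * exp ((1 / 2 : ℝ) • P) := by
    rw [(hP.smul (IsSelfAdjoint.all _)).exp.eq, ← Matrix.exp_add_of_commute _ _ (Commute.refl _),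
      ← add_smul]
    norm_num
  rw [h, mul_assoc, trace_mul_comm, mul_assoc, ← mul_assoc]
  exact (hQ.mul_mul_conjTranspose_same _).trace_nonneg

/-- Matrix Laplace transform bound for `k` independent samples from `p`: if `∑ pᵢ exp (Xᵢ) ≤ c` in
the Loewner order, then each sample multiplies the expected trace exponential by at most `c`. -/
theorem sum_prod_trace_exp_le [Nonempty m] {n : ℕ} {p : Fin n → ℝ} (hp : ∀ i, 0 ≤ p i)
    {X : Fin n → Matrix m m ℝ} (hX : ∀ i, (X i).IsHermitian) {c : ℝ} (hc0 : 0 ≤ c)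
    (hc : (c • (1 : Matrix m m ℝ) - ∑ i, p i • exp (X i)).PosSemidef) (k : ℕ) :
    ∑ f : Fin k → Fin n, (∏ j, p (f j)) * (exp (∑ j, X (f j))).trace
      ≤ Fintype.card m * c ^ k := by
  induction k with
  | zero => simp
  | succ k ih =>
    rw [← (Fin.consEquiv fun _ => Fin n).sum_comp, Fintype.sum_prod_type_right]
    simp only [Fin.consEquiv_apply, Fin.prod_univ_succ, Fin.sum_univ_succ, Fin.cons_zero,
      Fin.cons_succ]
    have step : ∀ f : Fin k → Fin n,
        ∑ i, (p i * ∏ j, p (f j)) * (exp (X i + ∑ j, X (f j))).trace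
          ≤ c * ((∏ j, p (f j)) * (exp (∑ j, X (f j))).trace) := fun f => by
      have hH : (∑ j, X (f j)).IsHermitian := by
        simp only [IsHermitian, conjTranspose_sum, (hX _).eq]
      have hw : 0 ≤ ∏ j, p (f j) := Finset.prod_nonneg fun j _ => hp _
      have h0 := trace_exp_mul_nonneg hH hc
      rw [mul_sub, trace_sub, Finset.mul_sum, trace_sum] at h0
      simp only [trace_smul, smul_eq_mul, mul_one, Algebra.mul_smul_comm] at h0
      calc _ ≤ ∑ i, (∏ j, p (f j)) * (p i * (exp (∑ j, X (f j)) * exp (X i)).trace) := by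
            refine Finset.sum_le_sum fun i _ => ?_
            rw [mul_comm (p i), mul_assoc, add_comm]
            have := golden_thompson hH (hX i)
            have := hp i
            gcongr
        _ ≤ _ := by
          rw [← Finset.mul_sum]
          nlinarith
    calc _ ≤ ∑ f : Fin k → Fin n, c * ((∏ j, p (f j)) * (exp (∑ j, X (f j))).trace) :=
          Finset.sum_le_sum fun f _ => step f
      _ ≤ _ := by
        rw [← Finset.mul_sum, pow_succ]
        nlinarith
end Spectral

/-! ### The sampled Gram matrix -/

section Gram
open NormedSpace
open scoped Matrix.Norms.L2Operator

/-- `AᵀA ≤ ‖A‖²` in the Loewner order. -/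
theorem posSemidef_specNorm_sq_sub {n d : ℕ} (A : Matrix (Fin n) (Fin d) ℝ) :
    ((specNorm A ^ 2) • (1 : Matrix (Fin d) (Fin d) ℝ) - Aᵀ * A).PosSemidef := by
  refine PosSemidef.of_dotProduct_mulVec_nonneg ?_ fun x => ?_
  · simp [IsHermitian, conjTranspose_eq_transpose_of_trivial]
  · have h := l2_opNorm_mulVec A (WithLp.toLp 2 x)
    have h' := pow_le_pow_left₀ (norm_nonneg _) h 2
    rw [mul_pow, EuclideanSpace.real_norm_sq_eq, EuclideanSpace.real_norm_sq_eq] at h'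
    have e : specNorm A = ‖A‖ := rfl
    rw [sub_mulVec, dotProduct_sub, smul_mulVec, one_mulVec, dotProduct_smul, ← mulVec_mulVec,
      dotProduct_mulVec, star_trivial, vecMul_transpose, e, sub_nonneg]
    simpa [dotProduct, sq] using h'

/-- Laplace transform bound for row norm squares sampling. The hypotheses on `p` say that
`pᵢ = ‖aᵢ‖² / F` is a probability vector; the sign of `θ` is free. -/
theorem sampling_mgf {n d : ℕ} [Nonempty (Fin d)] {A : Matrix (Fin n) (Fin d) ℝ}
    {F : ℝ} (hF : 0 < F) {p : Fin n → ℝ} (hp0 : ∀ i, 0 ≤ p i) (hp1 : ∑ i, p i = 1)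
    (hpF : ∀ i, A i ⬝ᵥ A i = p i * F) {θ : ℝ} (hθ : |θ| * F ≤ 3 / 2) (k : ℕ) :
    ∑ f : Fin k → Fin n, (∏ j, p (f j)) *
      (exp (∑ j, θ • ((p (f j))⁻¹ • vecMulVec (A (f j)) (A (f j)) - Aᵀ * A))).trace
      ≤ d * (1 + θ ^ 2 * F * specNorm A ^ 2) ^ k := by
  set G := Aᵀ * A with hG
  set B : Fin n → Matrix (Fin d) (Fin d) ℝ := fun i => (p i)⁻¹ • vecMulVec (A i) (A i) with hB
  have hrow : ∀ i, p i = 0 → A i = 0 := fun i hi => by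
    have := hpF i
    rwa [hi, zero_mul, dotProduct_self_eq_zero] at this
  have hBpsd : ∀ i, (B i).PosSemidef := fun i => by
    have := posSemidef_vecMulVec_self_star (A i)
    rw [star_trivial] at this
    exact this.smul (inv_nonneg.2 (hp0 i))
  -- When `p i = 0` the junk value `0⁻¹ = 0` is harmless, because then `A i = 0`.
  have hpB : ∑ i, p i • B i = G := by
    have h : ∀ i, p i • B i = vecMulVec (A i) (A i) := fun i => by
      by_cases hi : p i = 0
      · simp [hB, hi, hrow i hi]
      · simp [hB, smul_smul, mul_inv_cancel₀ hi]
    simp only [h]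
    ext a b
    simp [hG, Matrix.sum_apply, vecMulVec_apply, mul_apply]
  have hBB : ∀ i, B i * B i = F • B i := fun i => by
    by_cases hi : p i = 0
    · simp [hB, hi]
    · simp only [hB, Matrix.smul_mul, Matrix.mul_smul, vecMulVec_mul_vecMulVec, hpF, smul_smul,
        vecMulVec_smul]
      congr 1
      field_simp
  -- `F - B i` is positive semidefinite because its square is `F` times itself.
  have hFB : ∀ i, (F • (1 : Matrix (Fin d) (Fin d) ℝ) - B i).PosSemidef := fun i => by
    have hh : (F • (1 : Matrix (Fin d) (Fin d) ℝ) - B i)ᴴ = F • 1 - B i := by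
      rw [conjTranspose_sub, (hBpsd i).1.eq]; simp
    have h := (posSemidef_conjTranspose_mul_self (F • (1 : Matrix (Fin d) (Fin d) ℝ) - B i)).smul
      (inv_nonneg.2 hF.le)
    convert h using 1
    rw [hh]
    simp only [sub_mul, mul_sub, Matrix.smul_mul, Matrix.mul_smul, one_mul, mul_one, hBB,
      sub_self, sub_zero,
      smul_smul, smul_sub, inv_mul_cancel₀ hF.ne', one_smul]
    congr 2
    field_simp
  have hGpsd : G.PosSemidef := by
    have := posSemidef_conjTranspose_mul_self A
    rwa [conjTranspose_eq_transpose_of_trivial] at this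
  have hFG : (F • (1 : Matrix (Fin d) (Fin d) ℝ) - G).PosSemidef := by
    have h := posSemidef_sum Finset.univ fun i _ => (hFB i).smul (hp0 i)
    simp only [smul_sub, Finset.sum_sub_distrib, hpB, ← Finset.sum_smul, hp1, one_smul] at h
    exact h
  have hXh : ∀ i, (θ • (B i - G)).IsHermitian := fun i =>
    ((hBpsd i).1.sub hGpsd.1).smul (IsSelfAdjoint.all _)
  -- `0 ≤ B i, G ≤ F` gives `-F ≤ B i - G ≤ F`, and `|θ| * F ≤ 3 / 2`.
  have hr1 : ∀ i, ((3 / 2 : ℝ) • (1 : Matrix (Fin d) (Fin d) ℝ) - |θ| • (B i - G)).PosSemidef :=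
    fun i => by
      have := ((PosSemidef.one (n := Fin d) (R := ℝ)).smul (sub_nonneg.2 hθ)).add
        (((hFB i).add hGpsd).smul (abs_nonneg θ))
      convert this using 1
      module
  have hr2 : ∀ i, ((3 / 2 : ℝ) • (1 : Matrix (Fin d) (Fin d) ℝ) + |θ| • (B i - G)).PosSemidef :=
    fun i => by
      have := ((PosSemidef.one (n := Fin d) (R := ℝ)).smul (sub_nonneg.2 hθ)).add
        (((hBpsd i).add hFG).smul (abs_nonneg θ))
      convert this using 1
      module
  have hexp : ∀ i, (1 + θ • (B i - G) + (θ • (B i - G)) * (θ • (B i - G))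
      - exp (θ • (B i - G))).PosSemidef := fun i => by
    rcases abs_choice θ with h | h
    · exact posSemidef_one_add_add_sq_sub_exp (hXh i) (h ▸ hr1 i) (h ▸ hr2 i)
    · refine posSemidef_one_add_add_sq_sub_exp (hXh i) ?_ ?_
      · have := hr2 i
        rwa [h, neg_smul, ← sub_eq_add_neg] at this
      · have := hr1 i
        rwa [h, neg_smul, sub_neg_eq_add] at this
  have hmain := sum_prod_trace_exp_le hp0 hXh (c := 1 + θ ^ 2 * F * specNorm A ^ 2)
    (by positivity) ?_ k
  · simpa using hmain
  -- `c - ∑ pᵢ exp Xᵢ = ∑ pᵢ (1 + Xᵢ + Xᵢ² - exp Xᵢ) + θ² F (q - G) + θ² G²`.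
  · have h1 := posSemidef_sum Finset.univ fun i _ => (hexp i).smul (hp0 i)
    have h2 := (posSemidef_specNorm_sq_sub A).smul (mul_nonneg (sq_nonneg θ) hF.le)
    have h3 := (posSemidef_conjTranspose_mul_self G).smul (sq_nonneg θ)
    rw [hGpsd.1.eq] at h3
    rw [← hG] at h2
    clear_value B G
    have h4 : ∑ i, p i • (1 + θ • (B i - G) + (θ • (B i - G)) * (θ • (B i - G))
        - exp (θ • (B i - G))) =
        1 + (θ ^ 2 * F) • G - θ ^ 2 • (G * G) - ∑ i, p i • exp (θ • (B i - G)) := by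
      have e : ∀ i, p i • (1 + θ • (B i - G) + (θ • (B i - G)) * (θ • (B i - G))
          - exp (θ • (B i - G))) = p i • ((1 : Matrix (Fin d) (Fin d) ℝ) - θ • G + θ ^ 2 • (G * G))
            + (θ + θ ^ 2 * F) • (p i • B i) - θ ^ 2 • (p i • B i * G) - θ ^ 2 • (G * (p i • B i))
            - p i • exp (θ • (B i - G)) := fun i => by
        simp only [sub_mul, mul_sub, Matrix.smul_mul, Matrix.mul_smul, hBB]
        module
      simp only [e, Finset.sum_sub_distrib, Finset.sum_add_distrib, ← Finset.smul_sum,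
        ← Finset.sum_smul, ← Finset.sum_mul, ← Finset.mul_sum, hpB, hp1]
      module
    rw [h4] at h1
    convert (h1.add h2).add h3 using 1
    module

theorem specNorm_mul_le_log {d : ℕ} [Nonempty (Fin d)] {Z : Matrix (Fin d) (Fin d) ℝ} {c : ℝ}
    (hc : 0 < c) (hZ : (c • Z).IsHermitian) :
    1 ≤ (exp (c • Z)).trace + (exp (-(c • Z))).trace ∧
    specNorm Z * c ≤ Real.log ((exp (c • Z)).trace + (exp (-(c • Z))).trace) := by
  have h := opNorm_le_log_trace_exp hZ
  rw [norm_smul, Real.norm_of_nonneg hc.le, mul_comm] at h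
  exact h
end Gram

/-- Optimization over the Laplace parameter. With `w² = L F q / s` the claimed bound equals
`2 w + 2 F L / (3 s)`; the choice `θ = w / (F q)` is admissible when `w ≤ 3 q / 2`, and otherwise
`θ = 3 / (2 F)` is used. -/
theorem optimize_theta {F q L s E : ℝ} (hF : 0 < F) (hq : 0 < q) (hL : 0 < L) (hs : 0 < s)
    (h : ∀ θ : ℝ, 0 < θ → θ * F ≤ 3 / 2 → E * (θ * s) ≤ L + s * (θ ^ 2 * F * q)) :
    E ≤ (Real.sqrt (4 * (F / q) * L / s) + 2 * (F / q) * L / (3 * s)) * q := by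
  set w := Real.sqrt (L * F * q / s) with hw
  have hw0 : 0 < w := Real.sqrt_pos.2 (by positivity)
  have hw2 : w ^ 2 = L * F * q / s := Real.sq_sqrt (by positivity)
  have hsq : Real.sqrt (4 * (F / q) * L / s) = 2 * w / q := by
    rw [Real.sqrt_eq_iff_eq_sq (by positivity) (by positivity), div_pow, mul_pow, hw2]
    field_simp
    norm_num
  have hR : (Real.sqrt (4 * (F / q) * L / s) + 2 * (F / q) * L / (3 * s)) * q
      = 2 * w + 2 * F * L / (3 * s) := by
    rw [hsq]; field_simp
  rw [hR]
  rcases le_or_gt w (3 / 2 * q) with hc | hc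
  · have h1 := h (w / (F * q)) (by positivity) (by
      rw [div_mul_eq_mul_div, div_le_iff₀ (by positivity)]; nlinarith)
    have e1 : s * ((w / (F * q)) ^ 2 * F * q) = L := by
      rw [div_pow, hw2]; field_simp
    have e2 : w / (F * q) * s * w = L := by
      rw [show w / (F * q) * s * w = w ^ 2 * s / (F * q) by ring, hw2]; field_simp
    have hpos : 0 < w / (F * q) * s := by positivity
    rw [e1] at h1
    have : E ≤ 2 * w := le_of_mul_le_mul_right (by linarith) hpos
    have : 0 < 2 * F * L / (3 * s) := by positivity
    linarith
  · have h1 := h (3 / (2 * F)) (by positivity) (by field_simp; norm_num)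
    have hpos : 0 < 3 / (2 * F) * s := by positivity
    have : E ≤ 2 * F * L / (3 * s) + 3 / 2 * q := by
      refine le_of_mul_le_mul_right (h1.trans (le_of_eq ?_)) hpos
      field_simp
    linarith

/-- Row norm squares sampling: expectation bound on the spectral-norm error of the
sampled Gram matrix `AᵀSᵀSA = (1/s) ∑ⱼ p_{iⱼ}⁻¹ A_{iⱼ,:}ᵀ A_{iⱼ,:}`. -/
theorem rowNormSampling_expectation_bound (n d s : ℕ) (hs : 0 < s)
    (A : Matrix (Fin n) (Fin d) ℝ) (hA : A ≠ 0)
    (frobSq : ℝ) (hfrob : frobSq = ∑ i, ∑ j, (A i j) ^ 2)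
    (p : Fin n → ℝ) (hp : ∀ i, p i = (∑ j, (A i j) ^ 2) / frobSq)
    (sr : ℝ) (hsr : sr = frobSq / (specNorm A) ^ 2)
    (M : (Fin s → Fin n) → Matrix (Fin d) (Fin d) ℝ)
    (hM : ∀ f, M f = (s : ℝ)⁻¹ •
      ∑ j : Fin s, (p (f j))⁻¹ • Matrix.vecMulVec (A (f j)) (A (f j))) :
    ∑ f : Fin s → Fin n, (∏ j, p (f j)) * specNorm (M f - Aᵀ * A) ≤
      (Real.sqrt (4 * sr * Real.log (2 * d) / s) +
        2 * sr * Real.log (2 * d) / (3 * s)) * (specNorm A) ^ 2 := by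
  obtain ⟨i₀, j₀, hij⟩ : ∃ i j, A i j ≠ 0 := by
    by_contra! h
    exact hA (by ext i j; exact h i j)
  have hne : Nonempty (Fin d) := ⟨j₀⟩
  have hd : 0 < d := j₀.pos
  have hd1 : (1 : ℝ) ≤ d := by exact_mod_cast hd
  have hs' : (0 : ℝ) < s := by exact_mod_cast hs
  have hF : 0 < frobSq := by
    rw [hfrob]
    refine Finset.sum_pos' (fun i _ => Finset.sum_nonneg fun j _ => sq_nonneg _)
      ⟨i₀, Finset.mem_univ _, Finset.sum_pos' (fun j _ => sq_nonneg _)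
        ⟨j₀, Finset.mem_univ _, by positivity⟩⟩
  have hp0 : ∀ i, 0 ≤ p i := fun i => by
    rw [hp]; exact div_nonneg (Finset.sum_nonneg fun j _ => sq_nonneg _) hF.le
  have hp1 : ∑ i, p i = 1 := by
    simp only [hp, ← Finset.sum_div, ← hfrob]
    exact div_self hF.ne'
  have hpF : ∀ i, A i ⬝ᵥ A i = p i * frobSq := fun i => by
    rw [hp, div_mul_cancel₀ _ hF.ne']
    simp [dotProduct, sq]
  have hq : 0 < specNorm A ^ 2 := by
    have h : specNorm A ≠ 0 := by
      intro h0
      have : (Matrix.toEuclideanLin A) = 0 := by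
        simpa [specNorm] using h0
      exact hA (by simpa using this)
    positivity
  have hL : 0 < Real.log (2 * d) := Real.log_pos (by linarith)
  have hprod : ∑ f : Fin s → Fin n, ∏ j, p (f j) = 1 := by
    have := Finset.prod_univ_sum (fun _ : Fin s => (Finset.univ : Finset (Fin n)))
      (fun _ i => p i)
    simp only [hp1, Finset.prod_const_one, Fintype.piFinset_univ] at this
    exact this.symm
  rw [hsr]
  refine optimize_theta hF hq hL hs' fun θ hθ hθF => ?_
  set W : (Fin s → Fin n) → Matrix (Fin d) (Fin d) ℝ := fun f =>
    ∑ j, θ • ((p (f j))⁻¹ • vecMulVec (A (f j)) (A (f j)) - Aᵀ * A) with hW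
  have hWM : ∀ f, W f = (θ * s) • (M f - Aᵀ * A) := fun f => by
    rw [hW, hM]
    simp only [Finset.smul_sum, Finset.sum_sub_distrib, Finset.sum_const, Finset.card_univ,
      Fintype.card_fin, smul_sub, smul_smul, mul_assoc, mul_inv_cancel_left₀ hs'.ne',
      ← Nat.cast_smul_eq_nsmul ℝ]
    rw [mul_comm (s : ℝ) θ]
  have hWh : ∀ f, (W f).IsHermitian := fun f => by
    simp [IsHermitian, hW, conjTranspose_eq_transpose_of_trivial, transpose_sum,
      transpose_vecMulVec]
  set T : (Fin s → Fin n) → ℝ := fun f =>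
    (NormedSpace.exp (W f)).trace + (NormedSpace.exp (-W f)).trace with hT
  set c := 1 + θ ^ 2 * frobSq * specNorm A ^ 2 with hc
  have hc0 : 0 < c := by positivity
  have hET : ∑ f, (∏ j, p (f j)) * T f ≤ 2 * d * c ^ s := by
    have h1 := sampling_mgf hF hp0 hp1 hpF (θ := θ) (by rwa [abs_of_pos hθ]) s
    have h2 := sampling_mgf hF hp0 hp1 hpF (θ := -θ) (by rwa [abs_neg, abs_of_pos hθ]) s
    simp only [neg_smul, Finset.sum_neg_distrib, neg_sq] at h2
    simp only [hT, mul_add, Finset.sum_add_distrib]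
    linarith
  have hnorm : ∀ f, 1 ≤ T f ∧ specNorm (M f - Aᵀ * A) * (θ * s) ≤ Real.log (T f) := fun f => by
    have h := hWh f
    simp only [hT]
    rw [hWM] at h ⊢
    exact specNorm_mul_le_log (by positivity) h
  -- Jensen's inequality for `log`, by its tangent line at `K`, an upper bound for `E T`.
  set K : ℝ := 2 * d * c ^ s with hK
  have hK0 : 0 < K := by positivity
  have htan : ∀ f, Real.log (T f) ≤ T f / K - 1 + Real.log K := fun f => by
    have hT0 : 0 < T f := by linarith [(hnorm f).1]
    have := Real.log_le_sub_one_of_pos (div_pos hT0 hK0)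
    rw [Real.log_div hT0.ne' hK0.ne'] at this
    linarith
  calc (∑ f : Fin s → Fin n, (∏ j, p (f j)) * specNorm (M f - Aᵀ * A)) * (θ * s)
      ≤ ∑ f : Fin s → Fin n, (∏ j, p (f j)) * (T f / K - 1 + Real.log K) := by
        rw [Finset.sum_mul]
        refine Finset.sum_le_sum fun f _ => ?_
        rw [mul_assoc]
        exact mul_le_mul_of_nonneg_left ((hnorm f).2.trans (htan f))
          (Finset.prod_nonneg fun j _ => hp0 _)
    _ = (∑ f, (∏ j, p (f j)) * T f) / K - 1 + Real.log K := by
        simp only [mul_add, mul_sub, Finset.sum_add_distrib, Finset.sum_sub_distrib,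
          ← Finset.sum_mul, hprod, ← mul_div_assoc, ← Finset.sum_div]
        ring
    _ ≤ Real.log K := by
        have := (div_le_one hK0).2 hET
        linarith
    _ = Real.log (2 * d) + s * Real.log c := by
        rw [hK, Real.log_mul (by positivity) (by positivity), Real.log_pow]
    _ ≤ _ := by
        have := Real.log_le_sub_one_of_pos hc0
        have : Real.log c ≤ θ ^ 2 * frobSq * specNorm A ^ 2 := by linarith
        gcongr
end

section
/- Let H_1,…,H_n be real symmetric positive semidefinite d×d matrices with ‖H_j‖ ≤ K for all j, and let Ā = (1/n)·Σ_{j=1}^{n} H_j be their average. Draw s indices i_1,…,i_s independently and uniformly at random from {1,…,n}. Then the expectation over the random indices satisfies E‖(1/s)·Σ_{j=1}^{s} H_{i_j} − Ā‖ ≤ √(8K²·log(2d)/s) + 2K·log(2d)/(3s). -/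
/-!
The bound is obtained from even trace moments, by the method of exchangeable pairs. Write
`X i = H i - Abar`, so that `∑ i, X i = 0`, and `S f = ∑ j, X (f j)` for a sample
`f : Fin s → Fin n`.

Since a fresh uniform index `k` gives `X k` mean zero,
`E tr S ^ (2r+2) = ∑ j, E tr ((X (f j) - X k) * S ^ (2r+1))`. Exchanging `f j` and `k` preserves
the uniform distribution, flips the sign of the first factor, and turns `S` into a matrix `S'`
with `S - S' = X (f j) - X k = H (f j) - H k`. Averaging the two expressions leaves
`(1/2) * E tr ((S - S') * (S ^ (2r+1) - S' ^ (2r+1)))`. The mean value trace inequality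
`trace_sub_mul_pow_sub_le` and `‖S - S'‖ ≤ 2K` bound this by `(2r+1) * 2K²` times the
`2r`-th moment, so (`moment_bound`)
`E tr S ^ (2p) ≤ d * (2p-1)!! * (2 s K²) ^ p ≤ d * (2 s K² p) ^ p`.

As `‖S‖ ^ (2p) ≤ tr S ^ (2p)`, the Jensen inequality with `p = ⌊log d⌋ + 1` yields
`(E ‖S‖)² ≤ 2 e s K² (log d + 1)`. Because `2e ≤ 8 log 2`, this is at most `8 s K² log (2d)`,
so that the square root term alone already dominates the expected deviation.
-/

open scoped BigOperators
open Matrix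

/-! ### Trace and norm inequalities for symmetric matrices -/

section Deterministic

open scoped Matrix.Norms.L2Operator

lemma specNorm_eq_norm {d : ℕ} (A : Matrix (Fin d) (Fin d) ℝ) : specNorm A = ‖A‖ := rfl

lemma pow_mul_pow_add_le {a b : ℝ} (ha : 0 ≤ a) (hb : 0 ≤ b) (i j : ℕ) :
    a ^ i * b ^ j + a ^ j * b ^ i ≤ a ^ (i + j) + b ^ (i + j) := by
  have h : 0 ≤ (a ^ i - b ^ i) * (a ^ j - b ^ j) := by
    rcases le_total a b with hab | hab
    · exact mul_nonneg_of_nonpos_of_nonpos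
        (sub_nonpos.2 (pow_le_pow_left₀ ha hab i)) (sub_nonpos.2 (pow_le_pow_left₀ ha hab j))
    · exact mul_nonneg
        (sub_nonneg.2 (pow_le_pow_left₀ hb hab i)) (sub_nonneg.2 (pow_le_pow_left₀ hb hab j))
  rw [pow_add, pow_add]
  linarith

/-- Scalar mean value inequality for odd powers, the commutative case of
`trace_sub_mul_pow_sub_le`. -/
lemma sub_mul_pow_sub_le (w y : ℝ) (r : ℕ) :
    (w - y) * (w ^ (2 * r + 1) - y ^ (2 * r + 1)) ≤
      (2 * r + 1) / 2 * ((w - y) ^ 2 * (w ^ (2 * r) + y ^ (2 * r))) := by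
  set G := ∑ i ∈ Finset.range (2 * r + 1), w ^ i * y ^ (2 * r + 1 - 1 - i) with hG
  have hgeom : G * (w - y) = w ^ (2 * r + 1) - y ^ (2 * r + 1) := by
    rw [hG]
    exact (Commute.all w y).geom_sum₂_mul _
  have hrefl : G = ∑ i ∈ Finset.range (2 * r + 1), w ^ (2 * r - i) * y ^ i := by
    rw [hG, ← Finset.sum_range_reflect]
    refine Finset.sum_congr rfl fun i hi => ?_
    have : i ≤ 2 * r := by simpa [Nat.lt_succ_iff] using hi
    congr 2
    omega
  -- symmetrize the geometric sum under `i ↦ 2 * r - i`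
  have hG2 : 2 * G ≤ (2 * r + 1) * (w ^ (2 * r) + y ^ (2 * r)) := by
    have : 2 * G = ∑ i ∈ Finset.range (2 * r + 1),
        (w ^ i * y ^ (2 * r - i) + w ^ (2 * r - i) * y ^ i) := by
      rw [Finset.sum_add_distrib, ← hrefl, two_mul, hG]
      simp
    rw [this]
    calc _ ≤ ∑ i ∈ Finset.range (2 * r + 1), (w ^ (2 * r) + y ^ (2 * r)) := by
          refine Finset.sum_le_sum fun i hi => ?_
          have hi' : i + (2 * r - i) = 2 * r := by
            have : i ≤ 2 * r := by simpa [Nat.lt_succ_iff] using hi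
            omega
          have h := pow_mul_pow_add_le (abs_nonneg w) (abs_nonneg y) i (2 * r - i)
          rw [hi', (even_two_mul r).pow_abs, (even_two_mul r).pow_abs] at h
          refine le_trans (add_le_add ?_ ?_) h <;>
          · refine (le_abs_self _).trans_eq ?_
            rw [abs_mul, abs_pow, abs_pow]
      _ = _ := by simp [mul_add]
  rw [← hgeom]
  nlinarith [mul_le_mul_of_nonneg_left hG2 (sq_nonneg (w - y))]

lemma exists_diagonalization {d : ℕ} {W : Matrix (Fin d) (Fin d) ℝ} (hW : W.IsHermitian) :
    ∃ (U : unitaryGroup (Fin d) ℝ) (w : Fin d → ℝ), ∀ k : ℕ,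
      W ^ k = (U : Matrix (Fin d) (Fin d) ℝ) * diagonal (fun a => w a ^ k) *
        star (U : Matrix (Fin d) (Fin d) ℝ) := by
  refine ⟨hW.eigenvectorUnitary, hW.eigenvalues, fun k => ?_⟩
  conv_lhs => rw [hW.spectral_theorem, ← map_pow, diagonal_pow]
  rfl

/-- Two symmetric matrices have a joint spectral weight: `P a b` is the squared inner product
of the `a`-th eigenvector of `W` with the `b`-th eigenvector of `Y`. -/
lemma exists_joint_weight {d : ℕ} {W Y : Matrix (Fin d) (Fin d) ℝ}
    (hW : W.IsHermitian) (hY : Y.IsHermitian) :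
    ∃ (P : Fin d → Fin d → ℝ) (w y : Fin d → ℝ), (∀ a b, 0 ≤ P a b) ∧
      ∀ i j : ℕ, (W ^ i * Y ^ j).trace = ∑ a, ∑ b, P a b * (w a ^ i * y b ^ j) := by
  obtain ⟨U, w, hU⟩ := exists_diagonalization hW
  obtain ⟨V, y, hV⟩ := exists_diagonalization hY
  set M : Matrix (Fin d) (Fin d) ℝ := star (U : Matrix (Fin d) (Fin d) ℝ) * V with hM
  refine ⟨fun a b => M a b ^ 2, w, y, fun a b => sq_nonneg _, fun i j => ?_⟩
  have h1 : (W ^ i * Y ^ j).trace =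
      (diagonal (fun a => w a ^ i) * M * (diagonal (fun b => y b ^ j) * star M)).trace := by
    rw [hU, hV, hM, star_mul, star_star]
    simp only [Matrix.mul_assoc]
    rw [Matrix.trace_mul_comm]
    simp only [Matrix.mul_assoc]
  rw [h1, Matrix.trace]
  refine Finset.sum_congr rfl fun a _ => ?_
  rw [Matrix.diag_apply, Matrix.mul_apply]
  refine Finset.sum_congr rfl fun b _ => ?_
  rw [diagonal_mul, diagonal_mul, star_apply, star_trivial]
  ring

/-- Mean value trace inequality for odd powers. Both traces are integrals against the joint
spectral weight, which reduces the claim to `sub_mul_pow_sub_le`. -/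
lemma trace_sub_mul_pow_sub_le {d : ℕ} {W Y : Matrix (Fin d) (Fin d) ℝ}
    (hW : W.IsHermitian) (hY : Y.IsHermitian) (r : ℕ) :
    ((W - Y) * (W ^ (2 * r + 1) - Y ^ (2 * r + 1))).trace ≤
      (2 * r + 1) / 2 * (((W - Y) ^ 2 * W ^ (2 * r)).trace +
        ((W - Y) ^ 2 * Y ^ (2 * r)).trace) := by
  obtain ⟨P, w, y, hP, h⟩ := exists_joint_weight hW hY
  have hL : ((W - Y) * (W ^ (2 * r + 1) - Y ^ (2 * r + 1))).trace =
      ∑ a, ∑ b, P a b * ((w a - y b) * (w a ^ (2 * r + 1) - y b ^ (2 * r + 1))) := by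
    have : ((W - Y) * (W ^ (2 * r + 1) - Y ^ (2 * r + 1))).trace =
        (W ^ (2 * r + 2) * Y ^ 0).trace - (W ^ 1 * Y ^ (2 * r + 1)).trace
          - (W ^ (2 * r + 1) * Y ^ 1).trace + (W ^ 0 * Y ^ (2 * r + 2)).trace := by
      rw [Matrix.trace_mul_comm (W ^ (2 * r + 1)) (Y ^ 1)]
      simp only [← Matrix.trace_sub, ← Matrix.trace_add]
      congr 1
      simp only [pow_succ' _ (2 * r), pow_succ' _ (2 * r + 1)]
      noncomm_ring
    rw [this]
    simp only [h, ← Finset.sum_sub_distrib, ← Finset.sum_add_distrib]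
    refine Finset.sum_congr rfl fun a _ => Finset.sum_congr rfl fun b _ => by ring
  have hR : ((W - Y) ^ 2 * W ^ (2 * r)).trace + ((W - Y) ^ 2 * Y ^ (2 * r)).trace =
      ∑ a, ∑ b, P a b * ((w a - y b) ^ 2 * (w a ^ (2 * r) + y b ^ (2 * r))) := by
    have h1 : ((W - Y) ^ 2 * W ^ (2 * r)).trace =
        (W ^ (2 * r + 2) * Y ^ 0).trace - 2 * (W ^ (2 * r + 1) * Y ^ 1).trace
          + (W ^ (2 * r) * Y ^ 2).trace := by
      have e : (W - Y) ^ 2 * W ^ (2 * r) = W ^ (2 * r + 2) - W * (Y * W ^ (2 * r))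
          - Y * W ^ (2 * r + 1) + Y ^ 2 * W ^ (2 * r) := by
        simp only [pow_succ' _ (2 * r), pow_succ' _ (2 * r + 1)]
        noncomm_ring
      rw [e, Matrix.trace_add, Matrix.trace_sub, Matrix.trace_sub,
        Matrix.trace_mul_comm W (Y * W ^ (2 * r)), Matrix.mul_assoc, ← pow_succ,
        Matrix.trace_mul_comm Y, Matrix.trace_mul_comm (Y ^ 2)]
      simp only [pow_zero, mul_one, pow_one]
      ring
    have h2 : ((W - Y) ^ 2 * Y ^ (2 * r)).trace =
        (W ^ 0 * Y ^ (2 * r + 2)).trace - 2 * (W ^ 1 * Y ^ (2 * r + 1)).trace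
          + (W ^ 2 * Y ^ (2 * r)).trace := by
      have e : (W - Y) ^ 2 * Y ^ (2 * r) = Y ^ (2 * r + 2) - Y * (W * Y ^ (2 * r))
          - W * Y ^ (2 * r + 1) + W ^ 2 * Y ^ (2 * r) := by
        simp only [pow_succ' _ (2 * r), pow_succ' _ (2 * r + 1)]
        noncomm_ring
      rw [e, Matrix.trace_add, Matrix.trace_sub, Matrix.trace_sub,
        Matrix.trace_mul_comm Y (W * Y ^ (2 * r)), Matrix.mul_assoc, ← pow_succ]
      simp only [pow_zero, one_mul, pow_one]
      ring
    rw [h1, h2]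
    simp only [h, Finset.mul_sum, ← Finset.sum_sub_distrib, ← Finset.sum_add_distrib]
    refine Finset.sum_congr rfl fun a _ => Finset.sum_congr rfl fun b _ => by ring
  rw [hL, hR, Finset.mul_sum]
  refine Finset.sum_le_sum fun a _ => ?_
  rw [Finset.mul_sum]
  refine Finset.sum_le_sum fun b _ => ?_
  have := mul_le_mul_of_nonneg_left (sub_mul_pow_sub_le (w a) (y b) r) (hP a b)
  linarith

/-- The trace `tr (Z² W^(2r))` is the squared Frobenius norm of `Z * W ^ r`, which is estimated
column by column. -/
lemma trace_sq_mul_pow_le {d : ℕ} {Z W : Matrix (Fin d) (Fin d) ℝ}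
    (hZ : Z.IsHermitian) (hW : W.IsHermitian) {c : ℝ} (hc : ‖Z‖ ≤ c) (r : ℕ) :
    (Z ^ 2 * W ^ (2 * r)).trace ≤ c ^ 2 * (W ^ (2 * r)).trace := by
  have hB : (W ^ r)ᵀ = W ^ r := by
    rw [← conjTranspose_eq_transpose_of_trivial]
    exact hW.pow r
  have hZ' : Zᵀ = Z := by
    rw [← conjTranspose_eq_transpose_of_trivial]
    exact hZ
  set B := W ^ r with hBdef
  have hWB : W ^ (2 * r) = B * B := by rw [hBdef, two_mul, pow_add]
  have h1 : (Z ^ 2 * (B * B)).trace = ∑ a, ∑ i, (Z *ᵥ B.col a) i ^ 2 := by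
    have : (Z ^ 2 * (B * B)).trace = ((Z * B)ᵀ * (Z * B)).trace := by
      rw [transpose_mul, hB, hZ', sq, ← Matrix.mul_assoc, Matrix.trace_mul_comm]
      simp only [Matrix.mul_assoc]
    rw [this, Matrix.trace]
    refine Finset.sum_congr rfl fun a _ => ?_
    rw [Matrix.diag_apply, Matrix.mul_apply]
    refine Finset.sum_congr rfl fun i _ => ?_
    rw [transpose_apply, ← sq]
    rfl
  have h2 : (B * B).trace = ∑ a, ∑ i, (B.col a) i ^ 2 := by
    have : (B * B).trace = (Bᵀ * B).trace := by rw [hB]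
    rw [this, Matrix.trace]
    refine Finset.sum_congr rfl fun a _ => ?_
    rw [Matrix.diag_apply, Matrix.mul_apply]
    refine Finset.sum_congr rfl fun i _ => ?_
    rw [transpose_apply, ← sq]
    rfl
  rw [hWB, h1, h2, Finset.mul_sum]
  refine Finset.sum_le_sum fun a _ => ?_
  have h := l2_opNorm_mulVec Z (WithLp.toLp 2 (B.col a))
  have h' := pow_le_pow_left₀ (norm_nonneg _)
    (h.trans (mul_le_mul_of_nonneg_right hc (norm_nonneg _))) 2
  rw [mul_pow, EuclideanSpace.real_norm_sq_eq, EuclideanSpace.real_norm_sq_eq] at h'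
  exact h'

lemma norm_pow_le_trace_pow {d : ℕ} {W : Matrix (Fin d) (Fin d) ℝ}
    (hW : W.IsHermitian) {p : ℕ} (hp : 0 < p) : ‖W‖ ^ (2 * p) ≤ (W ^ (2 * p)).trace := by
  obtain ⟨U, w, hU⟩ := exists_diagonalization hW
  have hnorm : ‖W‖ = ‖w‖ := by
    have h1 := hU 1
    simp only [pow_one] at h1
    rw [h1, ← Unitary.coe_star, CStarRing.norm_mul_coe_unitary, CStarRing.norm_coe_unitary_mul,
      l2_opNorm_diagonal]
  have htr : (W ^ (2 * p)).trace = ∑ a, w a ^ (2 * p) := by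
    rw [hU, Matrix.trace_mul_comm, ← Matrix.mul_assoc, Unitary.coe_star_mul_self, one_mul,
      trace_diagonal]
  have hnn : ∀ a, 0 ≤ w a ^ (2 * p) := fun a => (even_two_mul p).pow_nonneg _
  rw [hnorm, htr]
  rcases isEmpty_or_nonempty (Fin d) with hd | hd
  · rw [Subsingleton.elim w 0, norm_zero, zero_pow (by omega)]
    exact Finset.sum_nonneg fun a _ => by simp [hp.ne']
  · obtain ⟨a, ha⟩ := Finite.exists_max fun a => ‖w a‖
    have : ‖w‖ ≤ ‖w a‖ := (pi_norm_le_iff_of_nonneg (norm_nonneg _)).2 ha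
    calc ‖w‖ ^ (2 * p) ≤ ‖w a‖ ^ (2 * p) := pow_le_pow_left₀ (norm_nonneg _) this _
      _ = w a ^ (2 * p) := by rw [Real.norm_eq_abs, (even_two_mul p).pow_abs]
      _ ≤ _ := Finset.single_le_sum (f := fun a => w a ^ (2 * p)) (fun a _ => hnn a)
          (Finset.mem_univ a)

end Deterministic

/-! ### Trace moments of the sampled sum -/

section Sampling

open scoped Matrix.Norms.L2Operator

variable {n d s : ℕ}

lemma sum_sub_sum_update (X : Fin n → Matrix (Fin d) (Fin d) ℝ) (f : Fin s → Fin n)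
    (j : Fin s) (k : Fin n) :
    ∑ i, X (f i) - ∑ i, X (Function.update f j k i) = X (f j) - X k := by
  rw [← Finset.sum_sub_distrib, Finset.sum_eq_single j]
  · simp
  · intro i _ hi
    simp [Function.update_of_ne hi]
  · simp

/-- Exchanging the `j`-th sampled index with a fresh index preserves the uniform distribution. -/
lemma sum_resample {M : Type*} [AddCommMonoid M] (j : Fin s)
    (F : (Fin s → Fin n) → Fin n → M) :
    ∑ f, ∑ k, F (Function.update f j k) (f j) = ∑ f, ∑ k, F f k := by
  have hinv : Function.Involutive
      (fun q : (Fin s → Fin n) × Fin n => (Function.update q.1 j q.2, q.1 j)) := by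
    rintro ⟨f, k⟩
    simp
  rw [← Fintype.sum_prod_type' (f := fun f k => F f k),
    ← Fintype.sum_prod_type' (f := fun f k => F (Function.update f j k) (f j))]
  exact Equiv.sum_comp hinv.toPerm (fun q : (Fin s → Fin n) × Fin n => F q.1 q.2)

/-- Contribution of one sampled index to the trace moment of order `2 * r + 2`. -/
lemma sum_trace_resample_le {X : Fin n → Matrix (Fin d) (Fin d) ℝ}
    (hX : ∀ i, (X i).IsHermitian) {c : ℝ} (hc : ∀ i k, ‖X i - X k‖ ≤ c) (r : ℕ) (j : Fin s) :
    ∑ f : Fin s → Fin n, ∑ k, ((X (f j) - X k) * (∑ i, X (f i)) ^ (2 * r + 1)).trace ≤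
      (2 * r + 1) / 2 * c ^ 2 * (n * ∑ f : Fin s → Fin n, ((∑ i, X (f i)) ^ (2 * r)).trace) := by
  set S : (Fin s → Fin n) → Matrix (Fin d) (Fin d) ℝ := fun f => ∑ i, X (f i) with hS
  have hSh : ∀ f, (S f).IsHermitian := fun f =>
    isSelfAdjoint_sum _ fun i _ => hX (f i)
  have hdiff : ∀ f k, S f - S (Function.update f j k) = X (f j) - X k :=
    fun f k => sum_sub_sum_update X f j k
  -- exchanging the sampled index with the fresh one negates the first factor
  have hswap : ∑ f, ∑ k, ((X (f j) - X k) * S f ^ (2 * r + 1)).trace =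
      ∑ f, ∑ k, ((X k - X (f j)) * S (Function.update f j k) ^ (2 * r + 1)).trace := by
    rw [← sum_resample j]
    simp
  have hmom : ∑ f, ∑ k : Fin n, (S (Function.update f j k) ^ (2 * r)).trace =
      n * ∑ f, (S f ^ (2 * r)).trace := by
    rw [sum_resample j (fun f _ => (S f ^ (2 * r)).trace)]
    simp [Finset.mul_sum]
  have hmom' : ∑ f, ∑ _k : Fin n, (S f ^ (2 * r)).trace = n * ∑ f, (S f ^ (2 * r)).trace := by
    simp [Finset.mul_sum]
  have hterm : ∀ f k, ((X (f j) - X k) * S f ^ (2 * r + 1)).trace +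
      ((X k - X (f j)) * S (Function.update f j k) ^ (2 * r + 1)).trace ≤
      (2 * r + 1) / 2 * c ^ 2 * ((S f ^ (2 * r)).trace +
        (S (Function.update f j k) ^ (2 * r)).trace) := by
    intro f k
    have hZ : (X (f j) - X k).IsHermitian := (hX _).sub (hX _)
    have h1 := trace_sub_mul_pow_sub_le (hSh f) (hSh (Function.update f j k)) r
    rw [hdiff] at h1
    have h2 := trace_sq_mul_pow_le hZ (hSh f) (hc _ _) r
    have h3 := trace_sq_mul_pow_le hZ (hSh (Function.update f j k)) (hc _ _) r
    have h4 : ((X (f j) - X k) * S f ^ (2 * r + 1)).trace +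
        ((X k - X (f j)) * S (Function.update f j k) ^ (2 * r + 1)).trace =
        ((X (f j) - X k) *
          (S f ^ (2 * r + 1) - S (Function.update f j k) ^ (2 * r + 1))).trace := by
      rw [← Matrix.trace_add]
      congr 1
      noncomm_ring
    rw [h4]
    refine h1.trans ?_
    have hr : (0 : ℝ) ≤ (2 * r + 1) / 2 := by positivity
    have := mul_le_mul_of_nonneg_left (add_le_add h2 h3) hr
    linarith
  have hsum := Finset.sum_le_sum fun f (_ : f ∈ Finset.univ) =>
    Finset.sum_le_sum fun k (_ : k ∈ Finset.univ) => hterm f k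
  simp only [Finset.sum_add_distrib, ← Finset.mul_sum, mul_add] at hsum
  rw [← hswap, hmom] at hsum
  simp only [Finset.sum_const, Finset.card_univ, Fintype.card_fin, nsmul_eq_mul,
    ← Finset.mul_sum] at hsum
  linarith

lemma moment_step (hn : 0 < n) {X : Fin n → Matrix (Fin d) (Fin d) ℝ}
    (hX : ∀ i, (X i).IsHermitian) (hX0 : ∑ i, X i = 0) {c : ℝ}
    (hc : ∀ i k, ‖X i - X k‖ ≤ c) (r : ℕ) :
    ∑ f : Fin s → Fin n, ((∑ i, X (f i)) ^ (2 * (r + 1))).trace ≤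
      s * ((2 * r + 1) / 2 * c ^ 2) *
        ∑ f : Fin s → Fin n, ((∑ i, X (f i)) ^ (2 * r)).trace := by
  have hn' : (0 : ℝ) < n := by exact_mod_cast hn
  refine le_of_mul_le_mul_left ?_ hn'
  have h1 : (n : ℝ) * ∑ f : Fin s → Fin n, ((∑ i, X (f i)) ^ (2 * (r + 1))).trace =
      ∑ j : Fin s, ∑ f : Fin s → Fin n, ∑ k,
        ((X (f j) - X k) * (∑ i, X (f i)) ^ (2 * r + 1)).trace := by
    rw [Finset.sum_comm, Finset.mul_sum]
    refine Finset.sum_congr rfl fun f _ => ?_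
    set B := (∑ i, X (f i)) ^ (2 * r + 1) with hB
    -- the fresh index `k` contributes nothing, since the `X k` sum to zero
    have hk : ∀ j, ∑ k, ((X (f j) - X k) * B).trace = n * (X (f j) * B).trace := by
      intro j
      rw [← Matrix.trace_sum, ← Finset.sum_mul, Finset.sum_sub_distrib, hX0, sub_zero,
        Finset.sum_const, Finset.card_univ, Fintype.card_fin, smul_mul_assoc, Matrix.trace_smul,
        nsmul_eq_mul]
    simp only [hk]
    rw [← Finset.mul_sum, ← Matrix.trace_sum, ← Finset.sum_mul, hB, ← pow_succ']
    rfl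
  rw [h1]
  calc _ ≤ ∑ j : Fin s, (2 * r + 1) / 2 * c ^ 2 *
          (n * ∑ f : Fin s → Fin n, ((∑ i, X (f i)) ^ (2 * r)).trace) :=
        Finset.sum_le_sum fun j _ => sum_trace_resample_le hX hc r j
    _ = _ := by
        rw [Finset.sum_const, Finset.card_univ, Fintype.card_fin, nsmul_eq_mul]
        ring

/-- Induction step for `(2p-1)!! ≤ p ^ p`. -/
lemma two_mul_add_one_mul_pow_le (p : ℕ) : (2 * p + 1 : ℝ) * p ^ p ≤ (p + 1) ^ (p + 1) := by
  -- Bernoulli gives `(p + 1) ^ p ≥ 2 * p ^ p`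
  have h : 2 * (p : ℝ) ^ p ≤ (p + 1) ^ p ∨ p = 0 := by
    rcases Nat.eq_zero_or_pos p with h | h
    · exact Or.inr h
    left
    have hp : (0 : ℝ) < p := by exact_mod_cast h
    have hb := one_add_mul_le_pow (a := (p : ℝ)⁻¹) (by linarith [inv_pos.2 hp]) p
    rw [mul_inv_cancel₀ hp.ne'] at hb
    have e : ((p : ℝ) + 1) ^ p = p ^ p * (1 + (p : ℝ)⁻¹) ^ p := by
      rw [← mul_pow]
      congr 1
      field_simp
    rw [e]
    nlinarith [pow_pos hp p]
  rcases h with h | h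
  · rw [pow_succ]
    have hp : (0 : ℝ) ≤ (p : ℝ) ^ p := by positivity
    nlinarith [mul_le_mul_of_nonneg_right h (by positivity : (0 : ℝ) ≤ (p : ℝ) + 1)]
  · subst h
    norm_num

lemma moment_bound (hn : 0 < n) {X : Fin n → Matrix (Fin d) (Fin d) ℝ}
    (hX : ∀ i, (X i).IsHermitian) (hX0 : ∑ i, X i = 0) {c : ℝ}
    (hc : ∀ i k, ‖X i - X k‖ ≤ c) (p : ℕ) :
    ∑ f : Fin s → Fin n, ((∑ i, X (f i)) ^ (2 * p)).trace ≤
      (n : ℝ) ^ s * (d * (s * c ^ 2 / 2 * p) ^ p) := by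
  induction p with
  | zero => simp
  | succ p ih =>
    refine (moment_step hn hX hX0 hc p).trans ?_
    calc _ ≤ s * ((2 * p + 1) / 2 * c ^ 2) * ((n : ℝ) ^ s * (d * (s * c ^ 2 / 2 * p) ^ p)) :=
          mul_le_mul_of_nonneg_left ih (by positivity)
      _ = (n : ℝ) ^ s * d * (s * c ^ 2 / 2) ^ (p + 1) * ((2 * p + 1) * p ^ p) := by
          rw [mul_pow, pow_succ]
          ring
      _ ≤ (n : ℝ) ^ s * d * (s * c ^ 2 / 2) ^ (p + 1) * (p + 1) ^ (p + 1) :=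
          mul_le_mul_of_nonneg_left (two_mul_add_one_mul_pow_le p) (by positivity)
      _ = _ := by
          rw [mul_pow _ _ (p + 1)]
          push_cast
          ring

/-- The Jensen inequality for the uniform distribution on samples. -/
lemma expectation_pow_le (hn : 0 < n) {z : (Fin s → Fin n) → ℝ} (hz : ∀ f, 0 ≤ z f) (m : ℕ) :
    (∑ f, ((n : ℝ)⁻¹) ^ s * z f) ^ m ≤ ∑ f, ((n : ℝ)⁻¹) ^ s * z f ^ m := by
  have hn' : (n : ℝ) ≠ 0 := by exact_mod_cast hn.ne'
  have h1 : ∑ _f : Fin s → Fin n, ((n : ℝ)⁻¹) ^ s = 1 := by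
    rw [Finset.sum_const, Finset.card_univ, Fintype.card_fun, Fintype.card_fin,
      Fintype.card_fin, nsmul_eq_mul, Nat.cast_pow, ← mul_pow, mul_inv_cancel₀ hn', one_pow]
  exact Real.pow_arith_mean_le_arith_mean_pow Finset.univ _ z (fun _ _ => by positivity) h1
    (fun f _ => hz f) m

lemma expected_norm_sq_le (hn : 0 < n) {X : Fin n → Matrix (Fin d) (Fin d) ℝ}
    (hX : ∀ i, (X i).IsHermitian) (hX0 : ∑ i, X i = 0) {c : ℝ}
    (hc : ∀ i k, ‖X i - X k‖ ≤ c) {p : ℕ} (hp : 0 < p) (hd : (d : ℝ) ≤ Real.exp p) :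
    (∑ f : Fin s → Fin n, ((n : ℝ)⁻¹) ^ s * ‖∑ i, X (f i)‖) ^ 2 ≤
      Real.exp 1 * (s * c ^ 2 / 2 * p) := by
  have hn' : (0 : ℝ) < n := by exact_mod_cast hn
  have hcancel : ((n : ℝ)⁻¹) ^ s * (n : ℝ) ^ s = 1 := by
    rw [← mul_pow, inv_mul_cancel₀ hn'.ne', one_pow]
  refine le_of_pow_le_pow_left₀ hp.ne' (by positivity) ?_
  rw [← pow_mul]
  have hSh : ∀ f : Fin s → Fin n, (∑ i, X (f i)).IsHermitian := fun f =>
    isSelfAdjoint_sum _ fun i _ => hX (f i)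
  have hjensen := expectation_pow_le (s := s) hn (z := fun f => ‖∑ i, X (f i)‖)
    (fun f => norm_nonneg _) (2 * p)
  refine hjensen.trans ?_
  calc ∑ f : Fin s → Fin n, ((n : ℝ)⁻¹) ^ s * ‖∑ i, X (f i)‖ ^ (2 * p)
      ≤ ∑ f : Fin s → Fin n, ((n : ℝ)⁻¹) ^ s * ((∑ i, X (f i)) ^ (2 * p)).trace :=
        Finset.sum_le_sum fun f _ => mul_le_mul_of_nonneg_left
          (norm_pow_le_trace_pow (hSh f) hp) (by positivity)
    _ ≤ ((n : ℝ)⁻¹) ^ s * ((n : ℝ) ^ s * (d * (s * c ^ 2 / 2 * p) ^ p)) := by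
        rw [← Finset.mul_sum]
        exact mul_le_mul_of_nonneg_left (moment_bound hn hX hX0 hc p) (by positivity)
    _ = d * (s * c ^ 2 / 2 * p) ^ p := by rw [← mul_assoc, hcancel, one_mul]
    _ ≤ Real.exp p * (s * c ^ 2 / 2 * p) ^ p := mul_le_mul_of_nonneg_right hd (by positivity)
    _ = (Real.exp 1 * (s * c ^ 2 / 2 * p)) ^ p := by
        rw [mul_pow (Real.exp 1), ← Real.exp_nat_mul, mul_one]

/-- The moment bound at order `p = ⌊log d⌋ + 1`, which makes `d ^ (1 / p) ≤ e`; the constants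
then fit because `2 * e ≤ 8 * log 2`. -/
lemma expected_norm_le_sqrt (hn : 0 < n) (hs : 0 < s) (hd : 0 < d) {K : ℝ}
    {H : Fin n → Matrix (Fin d) (Fin d) ℝ} (hH : ∀ j, (H j).IsHermitian)
    (hK : ∀ j, ‖H j‖ ≤ K) {Abar : Matrix (Fin d) (Fin d) ℝ}
    (hAbar : Abar = (n : ℝ)⁻¹ • ∑ j, H j) :
    ∑ f : Fin s → Fin n, ((n : ℝ)⁻¹) ^ s * ‖(s : ℝ)⁻¹ • ∑ j, H (f j) - Abar‖ ≤
      Real.sqrt (8 * K ^ 2 * Real.log (2 * d) / s) := by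
  have hn' : (0 : ℝ) < n := by exact_mod_cast hn
  have hs' : (0 : ℝ) < s := by exact_mod_cast hs
  have hd' : (1 : ℝ) ≤ d := by exact_mod_cast hd
  have hlogd : 0 ≤ Real.log d := Real.log_nonneg hd'
  set X : Fin n → Matrix (Fin d) (Fin d) ℝ := fun j => H j - Abar with hXdef
  have hA : Abar.IsHermitian := by
    rw [hAbar]
    exact IsSelfAdjoint.smul (IsSelfAdjoint.all _) (isSelfAdjoint_sum _ fun j _ => hH j)
  have hX : ∀ j, (X j).IsHermitian := fun j => (hH j).sub hA
  have hX0 : ∑ j, X j = 0 := by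
    rw [hXdef, Finset.sum_sub_distrib, Finset.sum_const, Finset.card_univ, Fintype.card_fin,
      ← Nat.cast_smul_eq_nsmul ℝ, hAbar, smul_smul, mul_inv_cancel₀ hn'.ne', one_smul, sub_self]
  have hc : ∀ i k, ‖X i - X k‖ ≤ 2 * K := by
    intro i k
    have : X i - X k = H i - H k := by simp [hXdef]
    rw [this]
    linarith [norm_sub_le (H i) (H k), hK i, hK k]
  have hp : 0 < ⌊Real.log d⌋₊ + 1 := Nat.succ_pos _
  set p := ⌊Real.log d⌋₊ + 1 with hpdef
  have hp1 : Real.log d ≤ p := by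
    rw [hpdef]; push_cast; exact (Nat.lt_floor_add_one _).le
  have hp2 : (p : ℝ) ≤ Real.log d + 1 := by
    rw [hpdef]; push_cast; linarith [Nat.floor_le hlogd]
  have hdp : (d : ℝ) ≤ Real.exp p := by
    rw [← Real.exp_log (by linarith : (0 : ℝ) < d)]
    exact Real.exp_le_exp.2 hp1
  have hmain := expected_norm_sq_le (s := s) hn hX hX0 hc hp hdp
  have hscale : ∑ f : Fin s → Fin n, ((n : ℝ)⁻¹) ^ s * ‖(s : ℝ)⁻¹ • ∑ j, H (f j) - Abar‖ =
      (s : ℝ)⁻¹ * ∑ f : Fin s → Fin n, ((n : ℝ)⁻¹) ^ s * ‖∑ i, X (f i)‖ := by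
    rw [Finset.mul_sum]
    refine Finset.sum_congr rfl fun f _ => ?_
    have : (s : ℝ)⁻¹ • ∑ j, H (f j) - Abar = (s : ℝ)⁻¹ • ∑ i, X (f i) := by
      rw [hXdef, Finset.sum_sub_distrib, Finset.sum_const, Finset.card_univ, Fintype.card_fin,
        ← Nat.cast_smul_eq_nsmul ℝ, smul_sub, smul_smul, inv_mul_cancel₀ hs'.ne', one_smul]
    rw [this, norm_smul, Real.norm_of_nonneg (by positivity)]
    ring
  rw [hscale]
  refine Real.le_sqrt_of_sq_le ?_
  have hlog : Real.log (2 * d) = Real.log 2 + Real.log d :=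
    Real.log_mul two_ne_zero (by linarith)
  have hnum : 2 * Real.exp 1 * p ≤ 8 * Real.log (2 * d) := by
    rw [hlog]
    nlinarith [Real.exp_one_lt_d9, Real.log_two_gt_d9, Real.exp_pos 1]
  calc _ ≤ (s : ℝ)⁻¹ ^ 2 * (Real.exp 1 * (s * (2 * K) ^ 2 / 2 * p)) := by
        rw [mul_pow]
        exact mul_le_mul_of_nonneg_left hmain (by positivity)
    _ = K ^ 2 / s * (2 * Real.exp 1 * p) := by
        field_simp
    _ ≤ K ^ 2 / s * (8 * Real.log (2 * d)) := mul_le_mul_of_nonneg_left hnum (by positivity)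
    _ = _ := by ring

end Sampling

/-! ### The expectation bound -/

/-- Uniform sub-sampling of an average of symmetric PSD matrices with spectral norm
at most `K`: expectation bound on the spectral-norm deviation of the sample average. -/
theorem uniform_subsample_expectation_bound (n d s : ℕ) (hn : 0 < n) (hs : 0 < s)
    (K : ℝ) (H : Fin n → Matrix (Fin d) (Fin d) ℝ)
    (hpsd : ∀ j, (H j).PosSemidef) (hK : ∀ j, specNorm (H j) ≤ K)
    (Abar : Matrix (Fin d) (Fin d) ℝ) (hAbar : Abar = (n : ℝ)⁻¹ • ∑ j, H j) :
    ∑ f : Fin s → Fin n, ((n : ℝ)⁻¹) ^ s *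
        specNorm ((s : ℝ)⁻¹ • ∑ j : Fin s, H (f j) - Abar) ≤
      Real.sqrt (8 * K ^ 2 * Real.log (2 * d) / s) +
        2 * K * Real.log (2 * d) / (3 * s) := by
  have hK0 : 0 ≤ K := (norm_nonneg _).trans (hK ⟨0, hn⟩)
  -- for `d = 0` the junk value `log 0 = 0` makes both sides vanish
  rcases Nat.eq_zero_or_pos d with rfl | hd
  · have h0 : ∀ A : Matrix (Fin 0) (Fin 0) ℝ, specNorm A = 0 := fun A => by
      rw [Subsingleton.elim A 0]
      simp [specNorm]
    simp [h0]
  · have hlog : 0 ≤ Real.log (2 * d) := by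
      have : (1 : ℝ) ≤ d := by exact_mod_cast hd
      exact Real.log_nonneg (by linarith)
    have h := expected_norm_le_sqrt hn hs hd (fun j => (hpsd j).isHermitian) hK hAbar
    exact h.trans (le_add_of_nonneg_right (by positivity))
end
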